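/- arXiv:2501.08692 — 4 statements merged into one kernel-verified Lean document; each statement's English description precedes it below -/
import Mathlib

section
/- Let G be a finite abelian group and let p₁, …, p_k be elements of the complex group algebra ℂ[G]. The ideal I of ℂ[G] generated by {p₁, …, p_k} is a proper ideal (I ≠ ℂ[G]) if and only if there exists a group homomorphism μ : G → ℂˣ such that μ̂(p_i) = 0 for all i = 1, …, k, where μ̂ : ℂ[G] → ℂ is the ℂ-algebra homomorphism extending μ (i.e., μ̂(∑_{g∈G} λ_g g) = ∑_{g∈G} λ_g μ(g)). -/
/-!
A proper ideal lies in a maximal ideal `M`. By Zariski's lemma the residue field of a finitely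
generated algebra `A` over an algebraically closed field `K` at `M` is `K` itself, so `M` is the
kernel of an algebra homomorphism `A → K`. For `A = K[G]` these homomorphisms are the linear
extensions of the characters of `G`.
-/

section AlgClosed

variable {K A : Type*} [Field K] [IsAlgClosed K] [CommRing A] [Algebra K A]
  [Algebra.FiniteType K A]

theorem exists_algHom_ker_eq_of_isMaximal (M : Ideal A) [M.IsMaximal] :
    ∃ φ : A →ₐ[K] K, RingHom.ker φ = M := by
  let := Ideal.Quotient.field M
  have : Module.Finite K (A ⧸ M) := finite_of_finite_type_of_isJacobsonRing K (A ⧸ M)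
  let residueEquiv : K ≃ₐ[K] A ⧸ M :=
    AlgEquiv.ofBijective (Algebra.ofId K (A ⧸ M))
      IsAlgClosed.algebraMap_bijective_of_isIntegral
  refine ⟨residueEquiv.symm.toAlgHom.comp (Ideal.Quotient.mkₐ K M), ?_⟩
  ext a
  simp [RingHom.mem_ker, Ideal.Quotient.eq_zero_iff_mem]

theorem ideal_ne_top_iff_exists_algHom_le_ker (I : Ideal A) :
    I ≠ ⊤ ↔ ∃ φ : A →ₐ[K] K, I ≤ RingHom.ker φ := by
  constructor
  · intro hI
    obtain ⟨M, hM, hIM⟩ := I.exists_le_maximal hI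
    obtain ⟨φ, rfl⟩ := exists_algHom_ker_eq_of_isMaximal (K := K) M
    exact ⟨φ, hIM⟩
  · rintro ⟨φ, hφ⟩
    exact ne_top_of_le_ne_top (RingHom.ker_ne_top φ) hφ

theorem span_range_ne_top_iff_exists_algHom {ι : Type*} (p : ι → A) :
    Ideal.span (Set.range p) ≠ ⊤ ↔ ∃ φ : A →ₐ[K] K, ∀ i, φ (p i) = 0 := by
  simp only [ideal_ne_top_iff_exists_algHom_le_ker (K := K), Ideal.span_le,
    Set.range_subset_iff, SetLike.mem_coe, RingHom.mem_ker]

end AlgClosed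

/-- The algebra homomorphisms `R[G] → A` are the linear extensions of the characters `G → Aˣ`:
the universal property of the group algebra, with values restricted to units. -/
noncomputable def unitsCharEquivAlgHom (R A G : Type*) [CommSemiring R] [Semiring A]
    [Algebra R A] [Group G] : (G →* Aˣ) ≃ (MonoidAlgebra R G →ₐ[R] A) where
  toFun μ := MonoidAlgebra.lift R A G ((Units.coeHom A).comp μ)
  invFun φ := ((MonoidAlgebra.lift R A G).symm φ).toHomUnits
  left_inv μ := by ext; simp
  right_inv φ := by ext; simp

theorem stmt2_general {K G ι : Type*} [Field K] [IsAlgClosed K] [CommGroup G] [Group.FG G]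
    (p : ι → MonoidAlgebra K G) :
    Ideal.span (Set.range p) ≠ ⊤ ↔
      ∃ μ : G →* Kˣ, ∀ i,
        (MonoidAlgebra.lift K K G) ((Units.coeHom K).comp μ) (p i) = 0 :=
  (span_range_ne_top_iff_exists_algHom p).trans
    (unitsCharEquivAlgHom K K G).surjective.exists

/-- Let `G` be a finite abelian group and `p₁, …, p_k`
elements of the complex group algebra `ℂ[G]`.  The ideal generated by the
`pᵢ` is proper if and only if there is a homomorphism `μ : G → ℂˣ` whose
`ℂ`-algebra extension `μ̂ : ℂ[G] → ℂ` kills every `pᵢ`. -/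
theorem stmt2 {G : Type*} [CommGroup G] [Finite G] (k : ℕ)
    (p : Fin k → MonoidAlgebra ℂ G) :
    Ideal.span (Set.range p) ≠ ⊤ ↔
      ∃ μ : G →* ℂˣ, ∀ i : Fin k,
        (MonoidAlgebra.lift ℂ ℂ G) ((Units.coeHom ℂ).comp μ) (p i) = 0 :=
  stmt2_general p
end

section
/- Let G be a finite abelian group, let R = ℂ[t^{±1}] be the ring of Laurent polynomials over ℂ, and identify R[G] (the group algebra of G over R) with the ring ℂ[G][t^{±1}] of Laurent polynomials over ℂ[G]. Let S ⊆ R[G] be the multiplicative set of nonzero Laurent polynomials whose leading coefficient equals z·g for some z ∈ ℂ \ {0} and g ∈ G. For elements p₁, …, p_k ∈ R[G], the ideal of the localization (R[G])_S generated by the images of p₁, …, p_k is a proper ideal if and only if there exists a group homomorphism μ : G → ℂˣ such that μ̂(p_i) = 0 for all i = 1, …, k, where μ̂ : R[G] → R is the R-algebra homomorphism induced by μ (sending each group element g ∈ G to μ(g) ∈ ℂ ⊆ R). -/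
open LaurentPolynomial

/-- The multiplicative set `S` of nonzero Laurent polynomials over the group
algebra `ℂ[G]` whose leading coefficient (the coefficient of the highest
occurring power of `t`) is of the form `z • g` with `z ∈ ℂ \ {0}`, `g ∈ G`. -/
def leadingGroupLike (𝔽 G : Type*) [Field 𝔽] [Group G] :
    Set (LaurentPolynomial (MonoidAlgebra 𝔽 G)) :=
  {p | ∃ (n : ℤ) (z : 𝔽) (g : G), z ≠ 0 ∧
        p.coeff n = MonoidAlgebra.single g z ∧ ∀ m : ℤ, n < m → p.coeff m = 0}

/-- The map `μ̂ : R[G] → R` (with `R = ℂ[t^{±1}]` and `R[G]` identified with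
`ℂ[G][t^{±1}]`) induced by a homomorphism `μ : G → ℂˣ`: it applies, to each
coefficient of a Laurent polynomial over `ℂ[G]`, the `ℂ`-algebra
homomorphism `ℂ[G] → ℂ` extending `μ` (i.e. it sends each group element
`g ∈ G` to `μ(g) ∈ ℂ ⊆ R`). -/
noncomputable def inducedCharacterMap {G : Type*} [CommGroup G] (μ : G →* ℂˣ) :
    LaurentPolynomial (MonoidAlgebra ℂ G) → LaurentPolynomial ℂ :=
  fun x => .ofCoeff <| Finsupp.mapRange
    ((MonoidAlgebra.lift ℂ ℂ G) ((Units.coeHom ℂ).comp μ)) (map_zero _) x.coeff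

/-!
A proper ideal of `(𝔽[G][t^{±1}])_S` lies over a prime `P` of `𝔽[G][t^{±1}]` that misses `S`. In the
domain `𝔽[G][t^{±1}] ⧸ P` every `g ∈ G` is a root of unity, because `G` is torsion, hence a scalar
`μ g`, because `𝔽` is algebraically closed. So every `x` is congruent modulo `P` to `μ̂ x`. If
`x ∈ P` and `μ̂ x` were nonzero, then `μ̂ x` would be an element of `P` with leading coefficient a
nonzero scalar, that is, an element of `P ∩ S`. Conversely, `μ̂` sends `z · g` to `z * μ g ≠ 0`, so
its kernel is a prime ideal that misses `S`.
-/

section Character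

variable {𝔽 G B : Type*} [Field 𝔽]

lemma mem_range_algebraMap_of_isOfFinOrder [IsAlgClosed 𝔽] [Ring B] [IsDomain B] [Algebra 𝔽 B]
    {x : B} (hx : IsOfFinOrder x) : x ∈ (algebraMap 𝔽 B).range := by
  obtain ⟨n, hn, hxn⟩ := isOfFinOrder_iff_pow_eq_one.mp hx
  have hint : IsIntegral 𝔽 x := .of_pow hn (hxn ▸ isIntegral_one)
  exact minpoly.mem_range_of_degree_eq_one 𝔽 x
    (IsAlgClosed.degree_eq_one_of_irreducible 𝔽 (minpoly.irreducible hint))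

lemma exists_algebraMap_character_eq_of_isMulTorsion [IsAlgClosed 𝔽] [Group G] [Ring B]
    [IsDomain B] [Algebra 𝔽 B] (hG : IsMulTorsion G) (f : G →* B) :
    ∃ μ : G →* 𝔽ˣ, ∀ g, algebraMap 𝔽 B (μ g) = f g := by
  have hscalar (g : G) : ∃ z : 𝔽, algebraMap 𝔽 B z = f g :=
    mem_range_algebraMap_of_isOfFinOrder (f.isOfFinOrder (hG g))
  choose m hm using hscalar
  have hinj : Function.Injective (algebraMap 𝔽 B) := (algebraMap 𝔽 B).injective
  let μ : G →* 𝔽 :=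
    { toFun := m
      map_one' := hinj (by rw [hm, map_one, map_one])
      map_mul' := fun a b => hinj (by rw [hm, map_mul, map_mul, hm, hm]) }
  exact ⟨μ.toHomUnits, hm⟩

/-- The `𝔽`-algebra homomorphism `𝔽[G] → 𝔽` extending a character `μ : G → 𝔽ˣ` linearly;
`characterMap μ` applies it to each coefficient of a Laurent polynomial. -/
noncomputable def characterAlgHom [Monoid G] (μ : G →* 𝔽ˣ) : MonoidAlgebra 𝔽 G →ₐ[𝔽] 𝔽 :=
  MonoidAlgebra.lift 𝔽 𝔽 G ((Units.coeHom 𝔽).comp μ)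

lemma characterAlgHom_single [Monoid G] (μ : G →* 𝔽ˣ) (g : G) (z : 𝔽) :
    characterAlgHom μ (MonoidAlgebra.single g z) = z * μ g :=
  MonoidAlgebra.lift_single _ _ _

lemma exists_algebraMap_characterAlgHom_eq_of_isMulTorsion [IsAlgClosed 𝔽] [Group G] [Ring B]
    [IsDomain B] [Algebra 𝔽 B] (hG : IsMulTorsion G) (ψ : MonoidAlgebra 𝔽 G →ₐ[𝔽] B) :
    ∃ μ : G →* 𝔽ˣ, ∀ a, algebraMap 𝔽 B (characterAlgHom μ a) = ψ a := by
  obtain ⟨μ, hμ⟩ := exists_algebraMap_character_eq_of_isMulTorsion (𝔽 := 𝔽) hG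
    ((ψ : MonoidAlgebra 𝔽 G →* B).comp (MonoidAlgebra.of 𝔽 G))
  have hcomp : (Algebra.ofId 𝔽 B).comp (characterAlgHom μ) = ψ := by
    ext g
    simpa [Algebra.ofId_apply, characterAlgHom_single] using hμ g
  exact ⟨μ, DFunLike.congr_fun hcomp⟩

end Character

section CharacterMap

variable {𝔽 G B : Type*} [Field 𝔽] [Monoid G]

/-- The map `μ̂ : 𝔽[G][t^{±1}] → 𝔽[t^{±1}]` induced by a character `μ : G → 𝔽ˣ`, as a homomorphism
of `𝔽`-algebras over an arbitrary field; over `ℂ` it is `inducedCharacterMap μ`. -/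
noncomputable def characterMap (μ : G →* 𝔽ˣ) :
    (MonoidAlgebra 𝔽 G)[T;T⁻¹] →ₐ[𝔽] 𝔽[T;T⁻¹] :=
  AddMonoidAlgebra.mapAlgHom ℤ (characterAlgHom μ)

variable (𝔽 G) in
/-- The inclusion `𝔽[t^{±1}] → 𝔽[G][t^{±1}]` of the Laurent polynomials with scalar coefficients,
through which values of `characterMap` are compared with their arguments. -/
noncomputable def scalarLaurentInclusion :
    𝔽[T;T⁻¹] →ₐ[𝔽] (MonoidAlgebra 𝔽 G)[T;T⁻¹] :=
  AddMonoidAlgebra.mapAlgHom ℤ (Algebra.ofId 𝔽 (MonoidAlgebra 𝔽 G))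

lemma coeff_characterMap (μ : G →* 𝔽ˣ) (x : (MonoidAlgebra 𝔽 G)[T;T⁻¹]) (n : ℤ) :
    (characterMap μ x).coeff n = characterAlgHom μ (x.coeff n) :=
  AddMonoidAlgebra.coeff_mapAlgHom _ _ _

lemma coeff_scalarLaurentInclusion (q : 𝔽[T;T⁻¹]) (n : ℤ) :
    (scalarLaurentInclusion 𝔽 G q).coeff n = MonoidAlgebra.single 1 (q.coeff n) :=
  AddMonoidAlgebra.coeff_mapAlgHom _ _ _

lemma inducedCharacterMap_eq_characterMap {H : Type*} [CommGroup H] (μ : H →* ℂˣ)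
    (x : (MonoidAlgebra ℂ H)[T;T⁻¹]) : inducedCharacterMap μ x = characterMap μ x := by
  ext n
  exact (coeff_characterMap μ x n).symm

lemma scalarLaurentInclusion_characterMap_T (μ : G →* 𝔽ˣ) (n : ℤ) :
    scalarLaurentInclusion 𝔽 G (characterMap μ (T n)) = T n := by
  simp only [T, scalarLaurentInclusion, characterMap, AddMonoidAlgebra.mapAlgHom_single, map_one]

lemma scalarLaurentInclusion_characterMap_C (μ : G →* 𝔽ˣ) (a : MonoidAlgebra 𝔽 G) :
    scalarLaurentInclusion 𝔽 G (characterMap μ (C a)) =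
      algebraMap 𝔽 _ (characterAlgHom μ a) := by
  simp only [LaurentPolynomial.algebraMap_apply, ← single_eq_C, scalarLaurentInclusion,
    characterMap, AddMonoidAlgebra.mapAlgHom_single, Algebra.ofId_apply]

lemma exists_map_scalarLaurentInclusion_characterMap_eq {H : Type*} [Group H] [IsAlgClosed 𝔽]
    [Ring B] [IsDomain B] [Algebra 𝔽 B] (hH : IsMulTorsion H)
    (φ : (MonoidAlgebra 𝔽 H)[T;T⁻¹] →ₐ[𝔽] B) :
    ∃ μ : H →* 𝔽ˣ, ∀ x, φ (scalarLaurentInclusion 𝔽 H (characterMap μ x)) = φ x := by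
  obtain ⟨μ, hμ⟩ := exists_algebraMap_characterAlgHom_eq_of_isMulTorsion hH
    (φ.comp AddMonoidAlgebra.singleZeroAlgHom)
  have hcomp : φ.comp ((scalarLaurentInclusion 𝔽 H).comp (characterMap μ)) = φ := by
    refine AddMonoidAlgebra.algHom_ext (fun n => ?_) (AlgHom.ext fun a => ?_)
    · exact congrArg φ (scalarLaurentInclusion_characterMap_T μ n)
    · calc φ (scalarLaurentInclusion 𝔽 H (characterMap μ (C a)))
          = algebraMap 𝔽 B (characterAlgHom μ a) := by
            rw [scalarLaurentInclusion_characterMap_C, AlgHom.commutes]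
        _ = φ (C a) := hμ a
  exact ⟨μ, DFunLike.congr_fun hcomp⟩

end CharacterMap

section LeadingGroupLike

variable {𝔽 G : Type*} [Field 𝔽]

lemma scalarLaurentInclusion_mem_leadingGroupLike [Group G] {q : 𝔽[T;T⁻¹]} (hq : q ≠ 0) :
    scalarLaurentInclusion 𝔽 G q ∈ leadingGroupLike 𝔽 G := by
  obtain ⟨n, hn⟩ := WithBot.ne_bot_iff_exists.mp (mt degree_eq_bot_iff.mp hq)
  refine ⟨n, q.coeff n, 1, ?_, coeff_scalarLaurentInclusion q n, fun m hm => ?_⟩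
  · exact Finsupp.mem_support_iff.mp (Finset.mem_of_max hn.symm)
  · have hqm : q.coeff m = 0 :=
      Finsupp.notMem_support_iff.mp (Finset.notMem_of_max_lt hm hn.symm)
    rw [coeff_scalarLaurentInclusion, hqm, MonoidAlgebra.single_zero]

lemma characterMap_ne_zero_of_mem_leadingGroupLike [Group G] (μ : G →* 𝔽ˣ)
    {s : (MonoidAlgebra 𝔽 G)[T;T⁻¹]} (hs : s ∈ leadingGroupLike 𝔽 G) :
    characterMap μ s ≠ 0 := by
  obtain ⟨n, z, g, hz, hn, -⟩ := hs
  have hcoeff : (characterMap μ s).coeff n = z * μ g := by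
    rw [coeff_characterMap, hn, characterAlgHom_single]
  intro h
  rw [h] at hcoeff
  exact mul_ne_zero hz (μ g).ne_zero hcoeff.symm

variable [CommGroup G]

lemma disjoint_closure_leadingGroupLike_ker_characterMap (μ : G →* 𝔽ˣ) :
    Disjoint (Submonoid.closure (leadingGroupLike 𝔽 G) : Set (MonoidAlgebra 𝔽 G)[T;T⁻¹])
      (RingHom.ker (characterMap μ)) := by
  have : (RingHom.ker (characterMap μ)).IsPrime := RingHom.ker_isPrime _
  have hle : Submonoid.closure (leadingGroupLike 𝔽 G) ≤
      (RingHom.ker (characterMap μ)).primeCompl :=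
    Submonoid.closure_le.mpr fun _ hs => characterMap_ne_zero_of_mem_leadingGroupLike μ hs
  exact Set.disjoint_left.mpr hle

lemma exists_le_ker_characterMap_of_disjoint [IsAlgClosed 𝔽] (hG : IsMulTorsion G)
    {P : Ideal (MonoidAlgebra 𝔽 G)[T;T⁻¹]} [P.IsPrime]
    (hP : Disjoint (P : Set _) (leadingGroupLike 𝔽 G)) :
    ∃ μ : G →* 𝔽ˣ, P ≤ RingHom.ker (characterMap μ) := by
  obtain ⟨μ, hμ⟩ := exists_map_scalarLaurentInclusion_characterMap_eq (B := _ ⧸ P) hG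
    (Ideal.Quotient.mkₐ 𝔽 P)
  refine ⟨μ, fun x hx => ?_⟩
  have hmem : scalarLaurentInclusion 𝔽 G (characterMap μ x) ∈ P :=
    Ideal.Quotient.eq_zero_iff_mem.mp ((hμ x).trans (Ideal.Quotient.eq_zero_iff_mem.mpr hx))
  by_contra hne
  exact Set.disjoint_left.mp hP hmem (scalarLaurentInclusion_mem_leadingGroupLike hne)

lemma map_algebraMap_ne_top_iff_exists_le_ker_characterMap [IsAlgClosed 𝔽] (hG : IsMulTorsion G)
    (A : Type*) [CommRing A] [Algebra (MonoidAlgebra 𝔽 G)[T;T⁻¹] A]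
    [IsLocalization (Submonoid.closure (leadingGroupLike 𝔽 G)) A]
    (I : Ideal (MonoidAlgebra 𝔽 G)[T;T⁻¹]) :
    I.map (algebraMap _ A) ≠ ⊤ ↔ ∃ μ : G →* 𝔽ˣ, I ≤ RingHom.ker (characterMap μ) := by
  rw [IsLocalization.map_algebraMap_ne_top_iff_disjoint
    (Submonoid.closure (leadingGroupLike 𝔽 G))]
  constructor
  · intro hI
    obtain ⟨P, hP, hIP, hdisj⟩ := Ideal.exists_le_prime_disjoint I _ hI.symm
    obtain ⟨μ, hμ⟩ := exists_le_ker_characterMap_of_disjoint hG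
      (hdisj.mono_right Submonoid.subset_closure)
    exact ⟨μ, hIP.trans hμ⟩
  · rintro ⟨μ, hμ⟩
    exact (disjoint_closure_leadingGroupLike_ker_characterMap μ).mono_right hμ

end LeadingGroupLike

theorem stmt3_general {𝔽 G ι : Type*} [Field 𝔽] [IsAlgClosed 𝔽] [CommGroup G]
    (hG : IsMulTorsion G) (p : ι → (MonoidAlgebra 𝔽 G)[T;T⁻¹]) :
    Ideal.span (Set.range fun i =>
        algebraMap (MonoidAlgebra 𝔽 G)[T;T⁻¹]
          (Localization (Submonoid.closure (leadingGroupLike 𝔽 G))) (p i)) ≠ ⊤ ↔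
      ∃ μ : G →* 𝔽ˣ, ∀ i, characterMap μ (p i) = 0 := by
  rw [Set.range_comp' _ p, ← Ideal.map_span,
    map_algebraMap_ne_top_iff_exists_le_ker_characterMap hG]
  simp only [Ideal.span_le, Set.range_subset_iff, SetLike.mem_coe, RingHom.mem_ker]

/-- Let `G` be a finite abelian group, `R = ℂ[t^{±1}]`, and
identify `R[G]` with `ℂ[G][t^{±1}]`.  Let `S` be the multiplicative set of
nonzero Laurent polynomials whose leading coefficient is `z·g`, `z ≠ 0`,
`g ∈ G`.  For `p₁, …, p_k ∈ R[G]`, the ideal of the localization `(R[G])_S`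
generated by the images of the `pᵢ` is proper if and only if there is a
homomorphism `μ : G → ℂˣ` with `μ̂(pᵢ) = 0` for all `i`, where
`μ̂ : R[G] → R` is induced by `μ`. -/
theorem stmt3 {G : Type*} [CommGroup G] [Finite G] (k : ℕ)
    (p : Fin k → LaurentPolynomial (MonoidAlgebra ℂ G)) :
    Ideal.span (Set.range fun i =>
        algebraMap (LaurentPolynomial (MonoidAlgebra ℂ G))
          (Localization (Submonoid.closure (leadingGroupLike ℂ G))) (p i)) ≠ ⊤ ↔
      ∃ μ : G →* ℂˣ, ∀ i : Fin k, inducedCharacterMap μ (p i) = 0 := by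
  simpa only [inducedCharacterMap_eq_characterMap] using stmt3_general isMulTorsion_of_finite p
end

section
/- Let Γ be a balanced graph with no closed paths of odd length, equipped with an n-balanced colouring, and let e₁ ≠ e₂ be two edges of the same colour lying in the same equivalence class. Then the parity of the pair (e₁, e₂) is well defined: for a fixed simple cycle P containing both e₁ and e₂, the two arcs of P between e₁ and e₂ yield the same value (−1)^l (where l is the number of edges of that arc strictly between e₁ and e₂), and for any two simple cycles P and Q each containing both e₁ and e₂, parity_P(e₁, e₂) = parity_Q(e₁, e₂). -/
/-!  We work with finite graphs that are not necessarily simplicial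
(multiple edges between two vertices are allowed): a graph is given by a
vertex type `V`, an edge type `E`, and an endpoint map `ends : E → Sym2 V`.
Edges carry labels `l e` which are even integers `≥ 4`, and colours
`C e ∈ {1, …, n}` (modelled as `Fin n`). -/

/-- A walk of length `m` in the graph with endpoint map `ends : E → Sym2 V`:
a sequence of `m + 1` vertices together with `m` edges, the `i`-th edge
having the `i`-th and `(i+1)`-st vertices as its endpoints. -/
structure GraphWalk {V E : Type*} (ends : E → Sym2 V) (m : ℕ) where
  vert : Fin (m + 1) → V
  edge : Fin m → E
  ends_eq : ∀ i : Fin m, ends (edge i) = s(vert i.castSucc, vert i.succ)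

/-- A walk is closed if it starts and ends at the same vertex. -/
def GraphWalk.IsClosed {V E : Type*} {ends : E → Sym2 V} {m : ℕ}
    (w : GraphWalk ends m) : Prop :=
  w.vert 0 = w.vert (Fin.last m)

/-- A simple cycle: a nontrivial closed walk with pairwise distinct edges
and pairwise distinct vertices (apart from the repeated initial vertex). -/
def GraphWalk.IsSimpleCycle {V E : Type*} {ends : E → Sym2 V} {m : ℕ}
    (w : GraphWalk ends m) : Prop :=
  0 < m ∧ w.IsClosed ∧ Function.Injective w.edge ∧
    Function.Injective fun i : Fin m => w.vert i.castSucc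

/-- A minimal simple cycle: a simple cycle whose edge set does not strictly
contain the edge set of any other simple cycle. -/
def GraphWalk.IsMinimalCycle {V E : Type*} {ends : E → Sym2 V} {m : ℕ}
    (w : GraphWalk ends m) : Prop :=
  w.IsSimpleCycle ∧ ∀ (m' : ℕ) (w' : GraphWalk ends m'), w'.IsSimpleCycle →
    Set.range w'.edge ⊆ Set.range w.edge → Set.range w'.edge = Set.range w.edge

/-- The relation `∼` on edges of colour `i`: `e ∼ f` iff there is a finite
sequence of minimal simple cycles `P₀, …, P_m` with `e ∈ P₀`, `f ∈ P_m`,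
and consecutive cycles sharing at least one edge of colour `i`. -/
def SameCycleClass {V E : Type*} (ends : E → Sym2 V) {n : ℕ} (C : E → Fin n)
    (i : Fin n) (e f : E) : Prop :=
  ∃ (m : ℕ) (len : Fin (m + 1) → ℕ)
    (cyc : (k : Fin (m + 1)) → GraphWalk ends (len k)),
      (∀ k, (cyc k).IsMinimalCycle) ∧
      e ∈ Set.range (cyc 0).edge ∧ f ∈ Set.range (cyc (Fin.last m)).edge ∧
      ∀ k : Fin m, ∃ g : E, C g = i ∧ g ∈ Set.range (cyc k.castSucc).edge ∧
        g ∈ Set.range (cyc k.succ).edge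

/-! Fix a colour and give an edge weight `0 : ZMod 2` if it has that colour and `1` otherwise. A
simple cycle has even length and evenly many edges of the colour, so its weights sum to zero.
Therefore the weight is, on finitely many edges, the coboundary of a vertex potential
`φ : V → ZMod 2`: add the edges one at a time; an edge closing a cycle is consistent with the
potential found so far, and an edge joining two components is made consistent by shifting the
potential on one of them. Now `φ` is constant on the endpoints of `e₁` and of `e₂`, and it changes
along every other edge of a cycle through both, so the number of edges between them has the parity
of `φ(e₁) + φ(e₂)`, whichever the cycle. -/

namespace GraphWalk

variable {V E : Type*} {ends : E → Sym2 V} {m : ℕ}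

/-- The part of a walk consisting of the `k` edges from its `a`-th vertex on. -/
def segment (c : GraphWalk ends m) (a k : ℕ) (h : a + k ≤ m) : GraphWalk ends k where
  vert i := c.vert ⟨a + i, by omega⟩
  edge i := c.edge ⟨a + i, by omega⟩
  ends_eq _ := c.ends_eq _

/-- The walk `c` followed by one more edge `e`, leading to the vertex `x`. -/
def snoc (c : GraphWalk ends m) (e : E) (x : V) (h : ends e = s(c.vert (Fin.last m), x)) :
    GraphWalk ends (m + 1) where
  vert := Fin.snoc (α := fun _ => V) c.vert x
  edge := Fin.snoc (α := fun _ => E) c.edge e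
  ends_eq := by
    refine Fin.lastCases ?_ fun i => ?_
    · simpa only [Fin.snoc_last, Fin.snoc_castSucc, Fin.succ_last] using h
    · simpa only [Fin.snoc_castSucc, Fin.succ_castSucc] using c.ends_eq i

theorem edge_injective_of_vert_injective {c : GraphWalk ends m}
    (hc : Function.Injective c.vert) : Function.Injective c.edge := by
  intro i j hij
  have hends : s(c.vert i.castSucc, c.vert i.succ) = s(c.vert j.castSucc, c.vert j.succ) := by
    rw [← c.ends_eq, ← c.ends_eq, hij]
  simp only [Sym2.eq_iff, hc.eq_iff, Fin.ext_iff, Fin.val_castSucc, Fin.val_succ] at hends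
  omega

theorem isSimpleCycle_snoc {c : GraphWalk ends m} (hc : Function.Injective c.vert) {e : E}
    (he : e ∉ Set.range c.edge) (h : ends e = s(c.vert (Fin.last m), c.vert 0)) :
    (c.snoc e (c.vert 0) h).IsSimpleCycle := by
  refine ⟨m.succ_pos, ?_, ?_, ?_⟩
  · exact (Fin.snoc_castSucc (α := fun _ => V) (c.vert 0) _ (0 : Fin (m + 1))).trans
      (Fin.snoc_last (α := fun _ => V) _ _).symm
  · exact Fin.snoc_injective_iff.2 ⟨edge_injective_of_vert_injective hc, he⟩
  · simpa only [snoc, Fin.snoc_castSucc] using hc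

theorem exists_vert_injective_of_reachable {S : Set E} {u v : V}
    (h : (SimpleGraph.fromEdgeSet (ends '' S)).Reachable u v) :
    ∃ (k : ℕ) (c : GraphWalk ends k), Function.Injective c.vert ∧
      c.vert 0 = u ∧ c.vert (Fin.last k) = v ∧ ∀ j, c.edge j ∈ S := by
  obtain ⟨p, hp⟩ := h.exists_isPath
  have hedge (j : Fin p.length) : ∃ e ∈ S, ends e = s(p.getVert j, p.getVert (j + 1)) :=
    ((SimpleGraph.fromEdgeSet_adj _).1 (p.adj_getVert_succ j.isLt)).1
  choose g hgS hg using hedge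
  refine ⟨p.length, ⟨fun i => p.getVert i, g, hg⟩, fun i j hij => ?_, p.getVert_zero,
    p.getVert_length, hgS⟩
  exact Fin.ext (hp.getVert_injOn (Nat.lt_succ_iff.1 i.isLt) (Nat.lt_succ_iff.1 j.isLt) hij)

end GraphWalk

section Potential

variable {V E : Type*}

/-- The edge weight `w` is a cocycle: its values along every simple cycle sum to zero. -/
def VanishesOnCycles (ends : E → Sym2 V) (w : E → ZMod 2) : Prop :=
  ∀ (m : ℕ) (c : GraphWalk ends m), c.IsSimpleCycle → ∑ j, w (c.edge j) = 0

/-- On the edges of `S`, the weight `w` is the coboundary of the vertex function `φ`. Over `ZMod 2`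
the difference of `φ` across an edge is the sum over its endpoints, so no orientation is needed. -/
def IsPotentialOn (ends : E → Sym2 V) (w : E → ZMod 2) (S : Set E) (φ : V → ZMod 2) : Prop :=
  ∀ e ∈ S, ∀ x y, ends e = s(x, y) → φ x + φ y = w e

namespace IsPotentialOn

variable {ends : E → Sym2 V} {w : E → ZMod 2} {S : Set E} {φ : V → ZMod 2} {e : E} {u v : V}

protected theorem insert (hφ : IsPotentialOn ends w S φ) (he : ends e = s(u, v))
    (huv : φ u + φ v = w e) : IsPotentialOn ends w (insert e S) φ := by
  rintro f (rfl | hf) x y hxy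
  · rcases Sym2.eq_iff.1 (he.symm.trans hxy) with ⟨rfl, rfl⟩ | ⟨rfl, rfl⟩
    · exact huv
    · rwa [add_comm]
  · exact hφ f hf x y hxy

theorem apply_eq_apply_of_weight_eq_zero (hφ : IsPotentialOn ends w S φ) (he : e ∈ S) (hw : w e = 0)
    (hu : u ∈ ends e) (hv : v ∈ ends e) : φ u = φ v := by
  by_cases huv : u = v
  · rw [huv]
  · exact CharTwo.add_eq_zero.1
      ((hφ e he u v ((Sym2.mem_and_mem_iff huv).1 ⟨hu, hv⟩)).trans hw)

theorem sum_edge {m : ℕ} {c : GraphWalk ends m} (hφ : IsPotentialOn ends w S φ)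
    (hc : ∀ j, c.edge j ∈ S) :
    ∑ j, w (c.edge j) = φ (c.vert 0) + φ (c.vert (Fin.last m)) := by
  have hsum : ∑ j, w (c.edge j) =
      ∑ j : Fin m, φ (c.vert j.castSucc) + ∑ j : Fin m, φ (c.vert j.succ) := by
    rw [← Finset.sum_add_distrib]
    exact Finset.sum_congr rfl fun j _ => (hφ _ (hc j) _ _ (c.ends_eq j)).symm
  have hshift := (Fin.sum_univ_castSucc fun i => φ (c.vert i)).symm.trans (Fin.sum_univ_succ _)
  linear_combination hsum + hshift + CharTwo.add_self_eq_zero (∑ j : Fin m, φ (c.vert j.succ)) -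
    CharTwo.add_self_eq_zero (φ (c.vert (Fin.last m)))

theorem apply_add_apply_of_reachable (hφ : IsPotentialOn ends w S φ)
    (hw : VanishesOnCycles ends w) (heS : e ∉ S) (he : ends e = s(u, v))
    (huv : (SimpleGraph.fromEdgeSet (ends '' S)).Reachable u v) : φ u + φ v = w e := by
  obtain ⟨k, c, hinj, rfl, rfl, hcS⟩ := GraphWalk.exists_vert_injective_of_reachable huv
  have he_notMem : e ∉ Set.range c.edge := by
    rintro ⟨j, rfl⟩
    exact heS (hcS j)
  have hcycle := hw _ _ (GraphWalk.isSimpleCycle_snoc hinj he_notMem (he.trans Sym2.eq_swap))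
  simp only [GraphWalk.snoc, Fin.sum_univ_castSucc, Fin.snoc_castSucc, Fin.snoc_last] at hcycle
  rw [hφ.sum_edge hcS] at hcycle
  exact CharTwo.add_eq_zero.1 hcycle

open Classical in
theorem add_const_on_component (hφ : IsPotentialOn ends w S φ) (u : V) (a : ZMod 2) :
    IsPotentialOn ends w S fun x =>
      φ x + if (SimpleGraph.fromEdgeSet (ends '' S)).Reachable u x then a else 0 := by
  intro f hf x y hxy
  have hreach : (SimpleGraph.fromEdgeSet (ends '' S)).Reachable x y := by
    by_cases h : x = y
    · exact h ▸ .rfl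
    · exact SimpleGraph.Adj.reachable
        ((SimpleGraph.fromEdgeSet_adj _).2 ⟨⟨f, hf, hxy⟩, h⟩)
  have hiff : (SimpleGraph.fromEdgeSet (ends '' S)).Reachable u x ↔
      (SimpleGraph.fromEdgeSet (ends '' S)).Reachable u y :=
    ⟨fun h => h.trans hreach, fun h => h.trans hreach.symm⟩
  simp only [hiff]
  rw [add_add_add_comm, CharTwo.add_self_eq_zero, add_zero, hφ f hf x y hxy]

theorem exists_insert_of_not_reachable (hφ : IsPotentialOn ends w S φ) (he : ends e = s(u, v))
    (huv : ¬(SimpleGraph.fromEdgeSet (ends '' S)).Reachable u v) :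
    ∃ ψ, IsPotentialOn ends w (insert e S) ψ := by
  refine ⟨_, (hφ.add_const_on_component u (φ u + φ v + w e)).insert he ?_⟩
  rw [if_pos .rfl, if_neg huv]
  linear_combination CharTwo.add_self_eq_zero (φ u) + CharTwo.add_self_eq_zero (φ v)

end IsPotentialOn

theorem VanishesOnCycles.exists_isPotentialOn {ends : E → Sym2 V} {w : E → ZMod 2}
    (hw : VanishesOnCycles ends w) {S : Set E} (hS : S.Finite) :
    ∃ φ, IsPotentialOn ends w S φ := by
  induction S, hS using Set.Finite.induction_on with
  | empty => exact ⟨0, fun _ h => h.elim⟩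
  | @insert e S heS _ ih =>
    obtain ⟨φ, hφ⟩ := ih
    obtain ⟨⟨u, v⟩, he⟩ := Quot.exists_rep (ends e)
    by_cases huv : (SimpleGraph.fromEdgeSet (ends '' S)).Reachable u v
    · exact ⟨φ, hφ.insert he.symm (hφ.apply_add_apply_of_reachable hw heS he.symm huv)⟩
    · exact hφ.exists_insert_of_not_reachable he.symm huv

end Potential

section ArcLength

variable {m : ℕ} {a b : Fin m}

/-- The number of edges strictly between positions `a` and `b` of a cycle of length `m`, going
forward from `a`. The subtraction is never truncated, and reduction modulo `m` only matters when
`a < b`. -/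
def arcLength (a b : Fin m) : ℕ :=
  (m + b.val - a.val - 1) % m

theorem arcLength_of_lt (hab : a < b) : arcLength a b = b.val - a.val - 1 := by
  rw [arcLength, show m + b.val - a.val - 1 = b.val - a.val - 1 + m by omega, Nat.add_mod_right,
    Nat.mod_eq_of_lt (by omega)]

theorem arcLength_of_gt (hba : b < a) : arcLength a b = m + b.val - a.val - 1 :=
  Nat.mod_eq_of_lt (by omega)

theorem arcLength_add_arcLength (hab : a ≠ b) : arcLength a b + arcLength b a + 2 = m := by
  rcases lt_or_gt_of_ne hab with h | h <;> rw [arcLength_of_lt h, arcLength_of_gt h] <;> omega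

theorem even_arcLength_comm (hm : Even m) (hab : a ≠ b) :
    Even (arcLength a b) ↔ Even (arcLength b a) := by
  rw [← arcLength_add_arcLength hab, Nat.even_add] at hm
  exact Nat.even_add.1 (hm.2 even_two)

end ArcLength

namespace IsPotentialOn

variable {V E : Type*} {ends : E → Sym2 V} {w : E → ZMod 2} {S : Set E} {φ : V → ZMod 2}
  {m : ℕ} {c : GraphWalk ends m} {a b : Fin m} {x y : V}

theorem natCast_sub_sub_one (hφ : IsPotentialOn ends w S φ) (hc : ∀ j, c.edge j ∈ S)
    (hab : a < b) (hw : ∀ j, a < j → j < b → w (c.edge j) = 1) :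
    ((b.val - a.val - 1 : ℕ) : ZMod 2) = φ (c.vert a.succ) + φ (c.vert b.castSucc) := by
  let arc := c.segment (a + 1) (b - a - 1) (by omega)
  have hone (j) : w (arc.edge j) = 1 :=
    hw _ (Fin.lt_def.2 (by simp only; omega)) (Fin.lt_def.2 (by simp only; omega))
  have hfirst : arc.vert 0 = c.vert a.succ := rfl
  have hlast : arc.vert (Fin.last _) = c.vert b.castSucc :=
    congrArg c.vert (Fin.ext (by simp only [Fin.val_last, Fin.val_castSucc]; omega))
  have hsum := hφ.sum_edge (c := arc) fun _ => hc _
  simpa only [hone, hfirst, hlast, Finset.sum_const, Finset.card_univ, Fintype.card_fin,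
    nsmul_one] using hsum

theorem natCast_arcLength (hφ : IsPotentialOn ends w S φ) (hc : ∀ j, c.edge j ∈ S) (hm : Even m)
    (hab : a ≠ b) (ha : w (c.edge a) = 0) (hb : w (c.edge b) = 0)
    (hw : ∀ j, j ≠ a → j ≠ b → w (c.edge j) = 1)
    (hx : x ∈ ends (c.edge a)) (hy : y ∈ ends (c.edge b)) :
    (arcLength a b : ZMod 2) = φ x + φ y := by
  wlog hlt : a < b generalizing a b x y
  · rw [add_comm, ← this hab.symm hb ha (fun j hjb hja => hw j hja hjb) hy hx
      (lt_of_le_of_ne (not_lt.1 hlt) hab.symm)]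
    simp only [CharTwo.natCast_eq_ite, even_arcLength_comm hm hab]
  have hxa : φ x = φ (c.vert a.succ) :=
    hφ.apply_eq_apply_of_weight_eq_zero (hc a) ha hx (c.ends_eq a ▸ Sym2.mem_mk_right _ _)
  have hyb : φ y = φ (c.vert b.castSucc) :=
    hφ.apply_eq_apply_of_weight_eq_zero (hc b) hb hy (c.ends_eq b ▸ Sym2.mem_mk_left _ _)
  rw [arcLength_of_lt hlt, hxa, hyb,
    hφ.natCast_sub_sub_one hc hlt fun j haj hjb => hw j haj.ne' hjb.ne]

end IsPotentialOn

section Colour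

variable {V E ι : Type*} [DecidableEq ι]

/-- The weight of an edge outside the colour class `i` is `1`, that of an edge in it is `0`: summed
along a walk it counts modulo two the edges that remain when the colour class is contracted. -/
def offColour (C : E → ι) (i : ι) (e : E) : ZMod 2 :=
  if C e = i then 0 else 1

theorem vanishesOnCycles_offColour {ends : E → Sym2 V} {C : E → ι} {i : ι}
    (heven : ∀ (m : ℕ) (c : GraphWalk ends m), c.IsSimpleCycle → Even m)
    (hi : ∀ (m : ℕ) (c : GraphWalk ends m), c.IsSimpleCycle →
      Even (Finset.univ.filter fun j => C (c.edge j) = i).card) :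
    VanishesOnCycles ends (offColour C i) := by
  intro m c hc
  have hcount := Finset.card_filter_add_card_filter_not (s := Finset.univ)
    fun j => C (c.edge j) = i
  rw [Finset.card_univ, Fintype.card_fin] at hcount
  have hoff := (Nat.even_add.1 (hcount ▸ heven m c hc)).1 (hi m c hc)
  simp only [offColour, ← ite_not (C _ = i), Finset.sum_boole]
  exact ZMod.natCast_eq_zero_iff_even.2 hoff

theorem natCast_arcLength_of_isPotentialOn_offColour {ends : E → Sym2 V} {C : E → ι} {i : ι}
    {S : Set E} {φ : V → ZMod 2} (hφ : IsPotentialOn ends (offColour C i) S φ)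
    {m : ℕ} {c : GraphWalk ends m} (hc : ∀ j, c.edge j ∈ S) (hm : Even m)
    (hcard : (Finset.univ.filter fun j => C (c.edge j) = i).card ≤ 2)
    {a b : Fin m} (hab : a ≠ b) (ha : C (c.edge a) = i) (hb : C (c.edge b) = i)
    {x y : V} (hx : x ∈ ends (c.edge a)) (hy : y ∈ ends (c.edge b)) :
    (arcLength a b : ZMod 2) = φ x + φ y := by
  refine hφ.natCast_arcLength hc hm hab (if_pos ha) (if_pos hb) (fun j hja hjb => ?_) hx hy
  refine if_neg fun hj => hcard.not_gt (Finset.two_lt_card_iff.2 ⟨a, b, j, ?_⟩)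
  simp only [Finset.mem_filter_univ]
  exact ⟨ha, hb, hj, hab, hja.symm, hjb.symm⟩

end Colour

theorem stmt5_general {V E ι : Type*} [DecidableEq ι] (ends : E → Sym2 V) (C : E → ι) (i : ι)
    (heven : ∀ (m : ℕ) (w : GraphWalk ends m), w.IsSimpleCycle → Even m)
    (hbal : ∀ (m : ℕ) (w : GraphWalk ends m), w.IsSimpleCycle →
      (Finset.univ.filter fun j : Fin m => C (w.edge j) = i).card = 0 ∨
      (Finset.univ.filter fun j : Fin m => C (w.edge j) = i).card = 2)
    {e₁ e₂ : E} (hne : e₁ ≠ e₂) (he₁ : C e₁ = i) (he₂ : C e₂ = i)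
    {mP : ℕ} (P : GraphWalk ends mP) (hP : P.IsSimpleCycle)
    {aP bP : Fin mP} (haP : P.edge aP = e₁) (hbP : P.edge bP = e₂)
    {mQ : ℕ} (Q : GraphWalk ends mQ) (hQ : Q.IsSimpleCycle)
    {aQ bQ : Fin mQ} (haQ : Q.edge aQ = e₁) (hbQ : Q.edge bQ = e₂) :
    (-1 : ℤ) ^ arcLength aP bP = (-1) ^ arcLength bP aP ∧
      (-1 : ℤ) ^ arcLength aP bP = (-1) ^ arcLength aQ bQ := by
  have hvanish : VanishesOnCycles ends (offColour C i) :=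
    vanishesOnCycles_offColour heven fun m c hc => by
      rcases hbal m c hc with h | h <;> rw [h] <;> decide
  obtain ⟨φ, hφ⟩ := hvanish.exists_isPotentialOn
    ((Set.finite_range P.edge).union (Set.finite_range Q.edge))
  have hparity {m : ℕ} {R : GraphWalk ends m} (hR : R.IsSimpleCycle)
      (hmem : ∀ j, R.edge j ∈ Set.range P.edge ∪ Set.range Q.edge) {a b : Fin m}
      (ha : R.edge a = e₁) (hb : R.edge b = e₂) :
      (arcLength a b : ZMod 2) = φ (ends e₁).out.1 + φ (ends e₂).out.1 := by
    subst ha hb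
    exact natCast_arcLength_of_isPotentialOn_offColour hφ hmem (heven _ R hR)
      (by have := hbal _ R hR; omega) (ne_of_apply_ne R.edge hne) he₁ he₂
      (Sym2.out_fst_mem _) (Sym2.out_fst_mem _)
  have habP : aP ≠ bP := ne_of_apply_ne P.edge (by rwa [haP, hbP])
  refine ⟨neg_one_pow_congr (even_arcLength_comm (heven _ P hP) habP), neg_one_pow_congr ?_⟩
  rw [← ZMod.natCast_eq_zero_iff_even, ← ZMod.natCast_eq_zero_iff_even,
    hparity hP (fun j => .inl ⟨j, rfl⟩) haP hbP, hparity hQ (fun j => .inr ⟨j, rfl⟩) haQ hbQ]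

/-- Let `Γ` be a balanced graph with no closed paths of odd
length, equipped with an `n`-balanced colouring `C`, and let `e₁ ≠ e₂` be two
edges of the same colour lying in the same `∼`-equivalence class.  Then the
parity of the pair `(e₁, e₂)` is well defined: for a fixed simple cycle `P`
containing both edges (at positions `aP`, `bP`, so that the numbers of edges
strictly between `e₁` and `e₂` along the two arcs of `P` are
`(mP + bP - aP - 1) % mP` and `(mP + aP - bP - 1) % mP`), both arcs yield the
same value `(-1)^l`, and any two simple cycles `P`, `Q` containing both
edges yield the same parity. -/
theorem stmt5 {V E : Type*} [Finite V] [Finite E]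
    (ends : E → Sym2 V) (l : E → ℕ) (n : ℕ) (C : E → Fin n)
    -- the labels are even integers `≥ 4`
    (hlabel : ∀ e : E, 4 ≤ l e ∧ Even (l e))
    -- `C` is an `n`-balanced colouring
    (hcol : ∀ i : Fin n, ∃ p : ℕ, p.Prime ∧ ∀ e : E, C e = i → p ∣ l e / 2)
    -- no closed paths of odd length
    (hodd : ∀ (m : ℕ) (w : GraphWalk ends m), w.IsSimpleCycle → Even m)
    -- `Γ` is balanced: every closed path of even length contains exactly two
    -- or zero edges of each colour
    (hbal : ∀ (m : ℕ) (w : GraphWalk ends m), w.IsSimpleCycle → Even m →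
      ∀ i : Fin n,
        (Finset.univ.filter fun j : Fin m => C (w.edge j) = i).card = 0 ∨
        (Finset.univ.filter fun j : Fin m => C (w.edge j) = i).card = 2)
    (e₁ e₂ : E) (hne : e₁ ≠ e₂) (hcolor : C e₁ = C e₂)
    (hclass : SameCycleClass ends C (C e₁) e₁ e₂)
    {mP : ℕ} (P : GraphWalk ends mP) (hP : P.IsSimpleCycle)
    (aP bP : Fin mP) (haP : P.edge aP = e₁) (hbP : P.edge bP = e₂)
    {mQ : ℕ} (Q : GraphWalk ends mQ) (hQ : Q.IsSimpleCycle)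
    (aQ bQ : Fin mQ) (haQ : Q.edge aQ = e₁) (hbQ : Q.edge bQ = e₂) :
    ((-1 : ℤ) ^ ((mP + bP.val - aP.val - 1) % mP) =
        (-1 : ℤ) ^ ((mP + aP.val - bP.val - 1) % mP)) ∧
      ((-1 : ℤ) ^ ((mP + bP.val - aP.val - 1) % mP) =
        (-1 : ℤ) ^ ((mQ + bQ.val - aQ.val - 1) % mQ)) := by
  exact stmt5_general ends C (C e₁) hodd (fun m w hw => hbal m w hw (hodd m w hw) _) hne rfl
    hcolor.symm P hP haP hbP Q hQ haQ hbQ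
end

section
/- Let Γ be a balanced graph with no closed paths of odd length and let C be an n-balanced colouring of Γ. Then there exists a function p : E(Γ) → {1, −1} such that for every pair of distinct edges e₁, e₂ of the same colour lying in the same ∼-equivalence class, parity(e₁, e₂) = p(e₁)·p(e₂). -/
/-! Fix a colour `i`, and give every edge of colour `i` the sign `1` and every other edge the sign
`-1`. On a simple cycle the length and the number of edges of colour `i` are both even, so the
signs multiply to `1`. By Harary's theorem on signed graphs there is then a vertex sign `s i` such
that the sign of every edge is the product of the values of `s i` at its endpoints: for finitely
many edges it is found by adding them one at a time, an edge either closing a cycle or joining two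
components, one of which may be flipped; compactness of `V → ℤˣ` does the rest. So `s i` is constant
along edges of colour `i` and flips along all others. Let `p e` be the value of `s (C e)` at either
endpoint of `e`. Between two edges of colour `i` on a simple cycle there is no third one, so `s i`
flips once for every edge in between, which is the parity. -/

open Function

theorem eq_or_eq_of_card_le_two {α : Type*} {t : Finset α} (ht : t.card ≤ 2) {a b c : α}
    (ha : a ∈ t) (hb : b ∈ t) (hab : a ≠ b) (hc : c ∈ t) : c = a ∨ c = b := by
  by_contra! h
  exact ht.not_gt (Finset.two_lt_card.mpr ⟨a, ha, b, hb, c, hc, hab, h.1.symm, h.2.symm⟩)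

theorem prod_castSucc_mul_succ {m : ℕ} (h : Fin (m + 1) → ℤˣ) :
    ∏ j : Fin m, h j.castSucc * h j.succ = h 0 * h (Fin.last m) := by
  induction m with
  | zero => simp [Int.units_mul_self]
  | succ m ih =>
    have ih := ih fun j => h j.castSucc
    simp only [← Fin.succ_castSucc, Fin.castSucc_zero] at ih
    rw [Fin.prod_univ_castSucc, ih, Fin.succ_last, mul_assoc, ← mul_assoc (h (Fin.last m).castSucc),
      Int.units_mul_self, one_mul]

namespace GraphWalk

variable {V E : Type*} {ends : E → Sym2 V} {m : ℕ}

theorem edge_injective_of_vert_injective_s6 (w : GraphWalk ends m) (hw : Injective w.vert) :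
    Injective w.edge := by
  intro j k hjk
  have hends : s(w.vert j.castSucc, w.vert j.succ) = s(w.vert k.castSucc, w.vert k.succ) := by
    rw [← w.ends_eq, ← w.ends_eq, hjk]
  rcases Sym2.eq_iff.mp hends with ⟨h, -⟩ | ⟨h, h'⟩
  · exact Fin.castSucc_injective m (hw h)
  · have := congrArg Fin.val (hw h)
    have := congrArg Fin.val (hw h')
    simp only [Fin.val_castSucc, Fin.val_succ] at *
    omega

/-- The closed walk obtained from `w` by returning to its initial vertex along the edge `e`. -/
def close (w : GraphWalk ends m) (e : E) (he : ends e = s(w.vert (Fin.last m), w.vert 0)) :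
    GraphWalk ends (m + 1) where
  vert := Fin.snoc (α := fun _ => V) w.vert (w.vert 0)
  edge := Fin.snoc (α := fun _ => E) w.edge e
  ends_eq j := by
    induction j using Fin.lastCases with
    | last => simpa only [Fin.snoc_last, Fin.snoc_castSucc, Fin.succ_last] using he
    | cast j => simpa only [Fin.snoc_castSucc, Fin.succ_castSucc] using w.ends_eq j

theorem isSimpleCycle_close (w : GraphWalk ends m) (hw : Injective w.vert) {e : E}
    (he : ends e = s(w.vert (Fin.last m), w.vert 0)) (hne : e ∉ Set.range w.edge) :
    (w.close e he).IsSimpleCycle := by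
  refine ⟨m.succ_pos, ?_, ?_, ?_⟩
  · rw [IsClosed, ← Fin.castSucc_zero]
    simp only [close, Fin.snoc_castSucc, Fin.snoc_last]
  · exact Fin.snoc_injective_iff.mpr ⟨w.edge_injective_of_vert_injective_s6 hw, hne⟩
  · simpa only [close, Fin.snoc_castSucc] using hw

theorem exists_vert_injective_of_reachable_s6 {F : Set E} {u v : V}
    (huv : (SimpleGraph.fromEdgeSet (ends '' F)).Reachable u v) :
    ∃ (m : ℕ) (w : GraphWalk ends m), Injective w.vert ∧ Set.range w.edge ⊆ F ∧
      w.vert 0 = u ∧ w.vert (Fin.last m) = v := by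
  obtain ⟨p, hp⟩ := huv.exists_isPath
  have hadj (j : Fin p.length) : ∃ e ∈ F, ends e = s(p.getVert j, p.getVert (j + 1)) :=
    ((SimpleGraph.fromEdgeSet_adj _).mp (p.adj_getVert_succ j.isLt)).1
  choose edge hmem hends using hadj
  refine ⟨p.length, ⟨fun j => p.getVert j, edge, hends⟩, fun j k hjk => ?_,
    Set.range_subset_iff.mpr hmem, p.getVert_zero, p.getVert_length⟩
  exact Fin.ext (hp.getVert_injOn (Nat.lt_succ_iff.mp j.isLt) (Nat.lt_succ_iff.mp k.isLt) hjk)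

end GraphWalk

/-- The sign function `s` on the vertices induces the sign function `f` on the edges in `F`: the
sign of an edge is the product of the signs of its endpoints. In the language of signed graphs, `s`
is a switching function turning all signs on `F` into `1`. -/
def IsSwitchingOn {V E : Type*} (ends : E → Sym2 V) (f : E → ℤˣ) (F : Set E) (s : V → ℤˣ) : Prop :=
  ∀ e ∈ F, ∀ u v, ends e = s(u, v) → f e = s u * s v

namespace IsSwitchingOn

variable {V E : Type*} {ends : E → Sym2 V} {f : E → ℤˣ} {F : Set E} {s : V → ℤˣ} {m : ℕ}

theorem prod_edge (hs : IsSwitchingOn ends f F s) (w : GraphWalk ends m)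
    (hw : Set.range w.edge ⊆ F) :
    ∏ j, f (w.edge j) = s (w.vert 0) * s (w.vert (Fin.last m)) := by
  rw [← prod_castSucc_mul_succ fun j => s (w.vert j)]
  exact Finset.prod_congr rfl fun j _ => hs _ (hw ⟨j, rfl⟩) _ _ (w.ends_eq j)

theorem eq_of_mem (hs : IsSwitchingOn ends f F s) {e : E} (heF : e ∈ F) (he : f e = 1) {x y : V}
    (hx : x ∈ ends e) (hy : y ∈ ends e) : s x = s y := by
  obtain ⟨z, hz⟩ := hx
  have hxz : s x = s z := by
    rw [← Int.units_inv_eq_self (s z), ← mul_eq_one_iff_eq_inv, ← hs e heF x z hz, he]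
  rcases Sym2.mem_iff.mp (hz ▸ hy) with rfl | rfl
  · rfl
  · exact hxz

theorem vert_mul_vert_eq_neg_one_pow (hs : IsSwitchingOn ends f F s) (w : GraphWalk ends m)
    {x y : Fin (m + 1)} (hxy : x ≤ y)
    (hw : ∀ j : Fin m, x ≤ j.castSucc → j.succ ≤ y → w.edge j ∈ F ∧ f (w.edge j) = -1) :
    s (w.vert x) * s (w.vert y) = (-1) ^ (y.val - x.val) := by
  induction y using Fin.induction with
  | zero => simp [Fin.le_zero_iff.mp hxy, Int.units_mul_self]
  | succ j ih =>
    rcases hxy.eq_or_lt with rfl | hlt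
    · simp [Int.units_mul_self]
    have hxj : x ≤ j.castSucc := Fin.le_castSucc_iff.mpr hlt
    obtain ⟨hjF, hj⟩ := hw j hxj le_rfl
    have hflip : s (w.vert j.succ) = s (w.vert j.castSucc) * -1 := by
      rw [← hj, hs _ hjF _ _ (w.ends_eq j), ← mul_assoc, Int.units_mul_self, one_mul]
    have hval : j.succ.val - x.val = j.castSucc.val - x.val + 1 := Nat.succ_sub hxj
    rw [hflip, hval, pow_succ, ← mul_assoc,
      ih hxj fun k hk hkj => hw k hk (hkj.trans (Fin.castSucc_lt_succ).le)]

protected theorem insert (hs : IsSwitchingOn ends f F s) {e : E} {u v : V} (huv : ends e = s(u, v))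
    (he : f e = s u * s v) : IsSwitchingOn ends f (insert e F) s := by
  rintro g (rfl | hg) x y hxy
  · rcases Sym2.eq_iff.mp (huv.symm.trans hxy) with ⟨rfl, rfl⟩ | ⟨rfl, rfl⟩
    · exact he
    · rw [he, mul_comm]
  · exact hs g hg x y hxy

theorem mul_left_of_forall_ends_eq (hs : IsSwitchingOn ends f F s) {c : V → ℤˣ}
    (hc : ∀ e ∈ F, ∀ u v, ends e = s(u, v) → c u = c v) : IsSwitchingOn ends f F (c * s) := by
  intro e he u v huv
  rw [hs e he u v huv, Pi.mul_apply, Pi.mul_apply, hc e he u v huv, mul_mul_mul_comm,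
    Int.units_mul_self, one_mul]

theorem exists_insert_of_not_reachable (hs : IsSwitchingOn ends f F s) {e : E} {u v : V}
    (huv : ends e = s(u, v)) (hr : ¬ (SimpleGraph.fromEdgeSet (ends '' F)).Reachable v u) :
    ∃ s', IsSwitchingOn ends f (insert e F) s' := by
  classical
  let H := SimpleGraph.fromEdgeSet (ends '' F)
  let c (x : V) : ℤˣ := if H.Reachable v x then f e * (s u * s v) else 1
  have hc : ∀ g ∈ F, ∀ x y, ends g = s(x, y) → c x = c y := by
    intro g hg x y hxy
    rcases eq_or_ne x y with rfl | hne
    · rfl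
    have hadj : H.Adj x y := (SimpleGraph.fromEdgeSet_adj _).mpr ⟨⟨g, hg, hxy⟩, hne⟩
    have hiff : H.Reachable v x ↔ H.Reachable v y :=
      ⟨fun h => h.trans hadj.reachable, fun h => h.trans hadj.symm.reachable⟩
    simp only [c, hiff]
  refine ⟨c * s, (hs.mul_left_of_forall_ends_eq hc).insert huv ?_⟩
  have hcu : c u = 1 := if_neg hr
  have hcv : c v = f e * (s u * s v) := if_pos (SimpleGraph.Reachable.refl v)
  calc f e = f e * ((s u * s v) * (s u * s v)) := by rw [Int.units_mul_self, mul_one]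
    _ = (c * s) u * (c * s) v := by rw [Pi.mul_apply, Pi.mul_apply, hcu, hcv]; ac_rfl

theorem insert_of_reachable (hs : IsSwitchingOn ends f F s)
    (hf : ∀ (m : ℕ) (w : GraphWalk ends m), w.IsSimpleCycle → ∏ j, f (w.edge j) = 1)
    {e : E} (heF : e ∉ F) {u v : V} (huv : ends e = s(u, v))
    (hr : (SimpleGraph.fromEdgeSet (ends '' F)).Reachable v u) :
    IsSwitchingOn ends f (insert e F) s := by
  obtain ⟨m, w, hinj, hwF, rfl, rfl⟩ := GraphWalk.exists_vert_injective_of_reachable_s6 hr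
  have hcycle := hf _ _ (w.isSimpleCycle_close hinj huv fun he => heF (hwF he))
  simp only [GraphWalk.close, Fin.prod_univ_castSucc, Fin.snoc_castSucc, Fin.snoc_last,
    hs.prod_edge w hwF] at hcycle
  refine hs.insert huv ?_
  rw [mul_eq_one_iff_inv_eq, Int.units_inv_eq_self] at hcycle
  rw [← hcycle, mul_comm]

end IsSwitchingOn

section Harary

variable {V E : Type*} {ends : E → Sym2 V} {f : E → ℤˣ}

theorem exists_isSwitchingOn_finset
    (hf : ∀ (m : ℕ) (w : GraphWalk ends m), w.IsSimpleCycle → ∏ j, f (w.edge j) = 1)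
    (F : Finset E) : ∃ s, IsSwitchingOn ends f F s := by
  classical
  induction F using Finset.induction_on with
  | empty => exact ⟨1, by simp [IsSwitchingOn]⟩
  | insert e F heF ih =>
    obtain ⟨s, hs⟩ := ih
    obtain ⟨u, v, huv⟩ := Sym2.exists.mp ⟨ends e, rfl⟩
    rw [Finset.coe_insert]
    by_cases hr : (SimpleGraph.fromEdgeSet (ends '' F)).Reachable v u
    · exact ⟨s, hs.insert_of_reachable hf heF huv hr⟩
    · exact hs.exists_insert_of_not_reachable huv hr

theorem exists_isSwitchingOn_univ
    (hf : ∀ (m : ℕ) (w : GraphWalk ends m), w.IsSimpleCycle → ∏ j, f (w.edge j) = 1) :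
    ∃ s, IsSwitchingOn ends f Set.univ s := by
  have hclosed (e : E) : IsClosed {s | IsSwitchingOn ends f {e} s} := by
    simp only [IsSwitchingOn, Set.mem_singleton_iff, forall_eq, Set.ofPred_forall]
    exact isClosed_iInter fun u => isClosed_iInter fun v => isClosed_iInter fun _ =>
      isClosed_eq continuous_const (by fun_prop)
  have hfinite (F : Finset E) : (⋂ e ∈ F, {s | IsSwitchingOn ends f {e} s}).Nonempty := by
    obtain ⟨s, hs⟩ := exists_isSwitchingOn_finset hf F
    refine ⟨s, Set.mem_iInter₂.mpr fun e he => ?_⟩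
    rintro _ rfl
    exact hs _ he
  obtain ⟨s, hs⟩ := CompactSpace.iInter_nonempty hclosed hfinite
  exact ⟨s, fun e _ => Set.mem_iInter.mp hs e e rfl⟩

end Harary

/-- The sign of an edge relative to the colour `i`: trivial exactly on the edges of that colour. -/
def offColourSign {E ι : Type*} [DecidableEq ι] (C : E → ι) (i : ι) (e : E) : ℤˣ :=
  if C e = i then 1 else -1

theorem prod_offColourSign_eq_one {E ι : Type*} [DecidableEq ι] (C : E → ι) (i : ι) {m : ℕ}
    (edge : Fin m → E) (hm : Even m)
    (hcard : Even (Finset.univ.filter fun j : Fin m => C (edge j) = i).card) :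
    ∏ j, offColourSign C i (edge j) = 1 := by
  have hsum := Finset.card_filter_add_card_filter_not (s := Finset.univ)
    fun j : Fin m => C (edge j) = i
  rw [Finset.card_univ, Fintype.card_fin] at hsum
  have heven : Even (Finset.univ.filter fun j : Fin m => ¬ C (edge j) = i).card :=
    (Nat.even_add.mp (hsum.symm ▸ hm)).mp hcard
  simp only [offColourSign, Finset.prod_ite, Finset.prod_const, one_pow, one_mul, heven.neg_one_pow]

theorem neg_one_pow_arc_of_lt {m : ℕ} {a b : Fin m} (hab : a < b) :
    (-1 : ℤ) ^ ((m + b.val - a.val - 1) % m) = (-1) ^ (b.val - a.val - 1) := by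
  have hshift : m + b.val - a.val - 1 = b.val - a.val - 1 + m := by omega
  rw [hshift, Nat.add_mod_right, Nat.mod_eq_of_lt (by omega)]

theorem neg_one_pow_arc_comm {m : ℕ} (hm : Even m) (a b : Fin m) :
    (-1 : ℤ) ^ ((m + b.val - a.val - 1) % m) = (-1) ^ ((m + a.val - b.val - 1) % m) := by
  have hmod (k : ℕ) : Even (k % m) ↔ Even k := by
    rw [Nat.even_iff, Nat.even_iff, Nat.mod_mod_of_dvd k hm.two_dvd]
  refine neg_one_pow_congr ?_
  rw [hmod, hmod, Nat.even_iff, Nat.even_iff]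
  have := hm.two_dvd
  omega

theorem neg_one_pow_arc_eq_of_isSwitchingOn {V E ι : Type*} [DecidableEq ι] {ends : E → Sym2 V}
    {C : E → ι} {s : ι → V → ℤˣ}
    (hs : ∀ i, IsSwitchingOn ends (offColourSign C i) Set.univ (s i)) {m : ℕ}
    (w : GraphWalk ends m) {a b : Fin m} (hab : a < b) (hC : C (w.edge a) = C (w.edge b))
    (hcard : (Finset.univ.filter fun j : Fin m => C (w.edge j) = C (w.edge a)).card ≤ 2) :
    (-1) ^ (b.val - a.val - 1) =
      s (C (w.edge a)) (ends (w.edge a)).out.1 * s (C (w.edge b)) (ends (w.edge b)).out.1 := by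
  have hbetween (j : Fin m) (haj : a.succ ≤ j.castSucc) (hjb : j.succ ≤ b.castSucc) :
      offColourSign C (C (w.edge a)) (w.edge j) = -1 := by
    refine if_neg fun hj => ?_
    rcases eq_or_eq_of_card_le_two hcard (a := a) (b := b) (c := j) (by simp) (by simp [hC])
      hab.ne (by simp [hj]) with rfl | rfl
    · exact haj.not_gt Fin.castSucc_lt_succ
    · exact hjb.not_gt Fin.castSucc_lt_succ
  have hflips := (hs (C (w.edge a))).vert_mul_vert_eq_neg_one_pow w
    (Fin.succ_le_castSucc_iff.mpr hab) fun j haj hjb => ⟨trivial, hbetween j haj hjb⟩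
  have hconst (j : Fin m) {x : V} (hx : x ∈ ends (w.edge j)) :
      s (C (w.edge j)) (ends (w.edge j)).out.1 = s (C (w.edge j)) x :=
    (hs _).eq_of_mem trivial (if_pos rfl) (Sym2.out_fst_mem _) hx
  rw [hconst a (w.ends_eq a ▸ Sym2.mem_mk_right _ _), hconst b (w.ends_eq b ▸ Sym2.mem_mk_left _ _),
    ← hC, hflips, Fin.val_castSucc, Fin.val_succ, Nat.sub_sub]

theorem stmt6_general {V E ι : Type*} [DecidableEq ι] (ends : E → Sym2 V) (C : E → ι)
    (hodd : ∀ (m : ℕ) (w : GraphWalk ends m), w.IsSimpleCycle → Even m)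
    (hbal : ∀ (m : ℕ) (w : GraphWalk ends m), w.IsSimpleCycle → ∀ i : ι,
      (Finset.univ.filter fun j : Fin m => C (w.edge j) = i).card = 0 ∨
      (Finset.univ.filter fun j : Fin m => C (w.edge j) = i).card = 2) :
    ∃ p : E → ℤ, (∀ e : E, p e = 1 ∨ p e = -1) ∧
      ∀ e₁ e₂ : E, e₁ ≠ e₂ → C e₁ = C e₂ →
        ∀ (m : ℕ) (w : GraphWalk ends m), w.IsSimpleCycle →
          ∀ a b : Fin m, w.edge a = e₁ → w.edge b = e₂ →
            (-1 : ℤ) ^ ((m + b.val - a.val - 1) % m) = p e₁ * p e₂ := by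
  have hpos (i : ι) (m : ℕ) (w : GraphWalk ends m) (hw : w.IsSimpleCycle) :
      ∏ j, offColourSign C i (w.edge j) = 1 :=
    prod_offColourSign_eq_one C i w.edge (hodd m w hw) <| by
      rcases hbal m w hw i with h | h <;> simp [h]
  choose s hs using fun i => exists_isSwitchingOn_univ (hpos i)
  refine ⟨fun e => s (C e) (ends e).out.1, fun e => Int.isUnit_iff.mp (Units.isUnit _), ?_⟩
  rintro _ _ hne hC m w hw a b rfl rfl
  wlog hab : a < b generalizing a b
  · have hba : b < a := (not_lt.mp hab).lt_of_ne fun h => hne (h ▸ rfl)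
    rw [neg_one_pow_arc_comm (hodd m w hw), mul_comm]
    exact this b a hne.symm hC.symm hba
  have hcard := (hbal m w hw (C (w.edge a))).elim (fun h => h.le.trans zero_le_two) le_of_eq
  rw [neg_one_pow_arc_of_lt hab]
  simpa only [Units.val_pow_eq_pow_val, Units.val_neg, Units.val_one, Units.val_mul] using
    congrArg Units.val (neg_one_pow_arc_eq_of_isSwitchingOn hs w hab hC hcard)

/-- Let `Γ` be a balanced graph with no closed paths of odd
length and let `C` be an `n`-balanced colouring of `Γ`.  Then there is a
function `p : E → {1, -1}` such that for any pair of distinct edges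
`e₁, e₂` of the same colour lying in the same `∼`-equivalence class,
`parity (e₁, e₂) = p e₁ · p e₂`; here `parity (e₁, e₂)` is the common value
`(-1) ^ l` for any simple cycle `w` containing `e₁` and `e₂` (at positions
`a`, `b`), where `l = (m + b - a - 1) % m` is the number of edges of the
cycle lying strictly between `e₁` and `e₂` along an arc. -/
theorem stmt6 {V E : Type*} [Finite V] [Finite E]
    (ends : E → Sym2 V) (l : E → ℕ) (n : ℕ) (C : E → Fin n)
    -- the labels are even integers `≥ 4`
    (hlabel : ∀ e : E, 4 ≤ l e ∧ Even (l e))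
    -- `C` is an `n`-balanced colouring
    (hcol : ∀ i : Fin n, ∃ p : ℕ, p.Prime ∧ ∀ e : E, C e = i → p ∣ l e / 2)
    -- no closed paths of odd length
    (hodd : ∀ (m : ℕ) (w : GraphWalk ends m), w.IsSimpleCycle → Even m)
    -- `Γ` is balanced: every closed path of even length contains exactly two
    -- or zero edges of each colour
    (hbal : ∀ (m : ℕ) (w : GraphWalk ends m), w.IsSimpleCycle → Even m →
      ∀ i : Fin n,
        (Finset.univ.filter fun j : Fin m => C (w.edge j) = i).card = 0 ∨
        (Finset.univ.filter fun j : Fin m => C (w.edge j) = i).card = 2) :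
    ∃ p : E → ℤ, (∀ e : E, p e = 1 ∨ p e = -1) ∧
      ∀ e₁ e₂ : E, e₁ ≠ e₂ → C e₁ = C e₂ →
        SameCycleClass ends C (C e₁) e₁ e₂ →
        ∀ (m : ℕ) (w : GraphWalk ends m), w.IsSimpleCycle →
          ∀ a b : Fin m, w.edge a = e₁ → w.edge b = e₂ →
            (-1 : ℤ) ^ ((m + b.val - a.val - 1) % m) = p e₁ * p e₂ :=
  have ⟨p, hp, hparity⟩ := stmt6_general ends C hodd fun m w hw => hbal m w hw (hodd m w hw)
  ⟨p, hp, fun e₁ e₂ hne hC _ => hparity e₁ e₂ hne hC⟩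
end
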